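/- arXiv:math/0407262 — 2 statements merged into one kernel-verified Lean document; each statement's English description precedes it below -/
import Mathlib

section
/- For all 0 < u < v ≤ ∞, the Lebesgue integral of z ↦ z₁^{-d-α} over the slab P_β^{u,v} equals V_{d-1} · ∫_u^v t^{β(d-1) - d - α} dt, where V_{d-1} is the Lebesgue volume of the unit ball in ℝ^{d-1}. -/
open MeasureTheory Metric
open scoped ENNReal

/-- The Euclidean norm of the "tail" `z̃ = (z₂, …, z_d)` of a point
`z = (z₁, z̃) ∈ ℝ^d` (here `d = n + 2 ≥ 2`). -/
noncomputable def tailNorm {n : ℕ} (z : EuclideanSpace ℝ (Fin (n + 2))) : ℝ :=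
  Real.sqrt (∑ i ∈ Finset.univ.filter (fun i : Fin (n + 2) => i ≠ 0), z i ^ 2)

/-- The parabola-shaped region `P_β = {z = (z₁, z̃) : z₁ > 0, |z̃| < z₁^β}` in `ℝ^d`,
`d = n + 2 ≥ 2`. -/
def Pbeta (n : ℕ) (β : ℝ) : Set (EuclideanSpace ℝ (Fin (n + 2))) :=
  {z | 0 < z 0 ∧ tailNorm z < z 0 ^ β}

/-- The slab `P_β^{u,v} = P_β ∩ {z : u ≤ z₁ < v}`, where `v ∈ (0, ∞]` is an
extended real number. -/
def PbetaSlab (n : ℕ) (β u : ℝ) (v : ℝ≥0∞) : Set (EuclideanSpace ℝ (Fin (n + 2))) :=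
  Pbeta n β ∩ {z | u ≤ z 0 ∧ ENNReal.ofReal (z 0) < v}

/-- Splitting off the first coordinate. -/
noncomputable def splitMap (n : ℕ) (z : EuclideanSpace ℝ (Fin (n + 2))) :
    ℝ × EuclideanSpace ℝ (Fin (n + 1)) :=
  (z 0, WithLp.toLp 2 (fun j : Fin (n + 1) => z j.succ))

theorem splitMap_mp (n : ℕ) : MeasurePreserving (splitMap n) := by
  have h1 := PiLp.volume_preserving_ofLp (Fin (n + 2))
  have h2 := volume_preserving_piFinSuccAbove (fun _ : Fin (n + 2) => ℝ) 0
  have h3 := (MeasurePreserving.id (volume : Measure ℝ)).prod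
    (PiLp.volume_preserving_toLp (Fin (n + 1)))
  exact h3.comp (h2.comp h1)

theorem tailNorm_eq {n : ℕ} (z : EuclideanSpace ℝ (Fin (n + 2))) :
    tailNorm z = ‖(splitMap n z).2‖ := by
  unfold tailNorm splitMap
  rw [EuclideanSpace.norm_eq]
  congr 1
  rw [Finset.sum_filter, Fin.sum_univ_succ]
  simp

/-- The slab in product coordinates. -/
def prodSlab (n : ℕ) (β u : ℝ) (v : ℝ≥0∞) : Set (ℝ × EuclideanSpace ℝ (Fin (n + 1))) :=
  {p | (u ≤ p.1 ∧ ENNReal.ofReal p.1 < v) ∧ ‖p.2‖ < p.1 ^ β}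

theorem measurableSet_prodSlab (n : ℕ) (β u : ℝ) (v : ℝ≥0∞) :
    MeasurableSet (prodSlab n β u v) := by
  unfold prodSlab
  have h1 : MeasurableSet {p : ℝ × EuclideanSpace ℝ (Fin (n + 1)) | u ≤ p.1} :=
    measurableSet_le (by fun_prop) (by fun_prop)
  have h2 : MeasurableSet {p : ℝ × EuclideanSpace ℝ (Fin (n + 1)) | ENNReal.ofReal p.1 < v} :=
    measurableSet_lt (by fun_prop) (by fun_prop)
  have h3 : MeasurableSet {p : ℝ × EuclideanSpace ℝ (Fin (n + 1)) | ‖p.2‖ < p.1 ^ β} :=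
    measurableSet_lt (by fun_prop) (by fun_prop)
  exact (h1.inter h2).inter h3

theorem slab_eq (n : ℕ) (β u : ℝ) (v : ℝ≥0∞) (hu : 0 < u) :
    PbetaSlab n β u v = splitMap n ⁻¹' prodSlab n β u v := by
  ext z
  simp only [PbetaSlab, Pbeta, prodSlab, Set.mem_inter_iff, Set.mem_ofPred_eq, Set.mem_preimage,
    tailNorm_eq]
  have : (splitMap n z).1 = z 0 := rfl
  rw [this]
  constructor
  · rintro ⟨⟨_, h⟩, h'⟩
    exact ⟨h', h⟩
  · rintro ⟨h', h⟩
    exact ⟨⟨hu.trans_le h'.1, h⟩, h'⟩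

/-- For `0 < u < v ≤ ∞`, the Lebesgue integral of `z ↦ z₁^{-d-α}` over the slab
`P_β^{u,v}` equals `V_{d-1} · ∫_u^v t^{β(d-1) - d - α} dt`, where `V_{d-1}` is the
Lebesgue volume of the unit ball in `ℝ^{d-1}` (here `d = n + 2`). -/
theorem stmt6 (n : ℕ) (α β : ℝ) (hα0 : 0 < α) (hα2 : α < 2)
    (hβ0 : 0 < β) (hβ1 : β < 1) (u : ℝ) (v : ℝ≥0∞)
    (hu : 0 < u) (huv : ENNReal.ofReal u < v) :
    ∫ z in PbetaSlab n β u v, (z 0) ^ (-((n : ℝ) + 2) - α)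
      = (volume (ball (0 : EuclideanSpace ℝ (Fin (n + 1))) 1)).toReal
        * ∫ t in {t : ℝ | u ≤ t ∧ ENNReal.ofReal t < v},
            t ^ (β * ((n : ℝ) + 1) - ((n : ℝ) + 2) - α) := by
  have hI : MeasurableSet {t : ℝ | u ≤ t ∧ ENNReal.ofReal t < v} := by
    have h1 : MeasurableSet {t : ℝ | u ≤ t} :=
      measurableSet_le (by fun_prop) (by fun_prop)
    have h2 : MeasurableSet {t : ℝ | ENNReal.ofReal t < v} :=
      measurableSet_lt (by fun_prop) (by fun_prop)
    exact h1.inter h2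
  have hS := measurableSet_prodSlab n β u v
  have hslab : MeasurableSet (PbetaSlab n β u v) := by
    rw [slab_eq n β u v hu]
    exact (splitMap_mp n).measurable hS
  rw [integral_eq_lintegral_of_nonneg_ae, integral_eq_lintegral_of_nonneg_ae,
    ← ENNReal.toReal_mul]
  rotate_left
  · filter_upwards [ae_restrict_mem hI] with t ht
    exact Real.rpow_nonneg (hu.le.trans ht.1) _
  · exact Measurable.aestronglyMeasurable (by fun_prop)
  · filter_upwards [ae_restrict_mem hslab] with z hz
    exact Real.rpow_nonneg hz.1.1.le _
  · exact Measurable.aestronglyMeasurable (by fun_prop)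
  congr 1
  set a : ℝ := -((n : ℝ) + 2) - α with ha
  have hf : Measurable (fun p : ℝ × EuclideanSpace ℝ (Fin (n + 1)) =>
      ENNReal.ofReal (p.1 ^ a)) := by fun_prop
  have h1 : ∫⁻ z in PbetaSlab n β u v, ENNReal.ofReal (z 0 ^ a)
      = ∫⁻ p in prodSlab n β u v, ENNReal.ofReal (p.1 ^ a) := by
    rw [slab_eq n β u v hu]
    exact (splitMap_mp n).setLIntegral_comp_preimage hS hf
  rw [h1, ← lintegral_indicator hS, Measure.volume_eq_prod,
    lintegral_prod _ (hf.indicator hS).aemeasurable, ← lintegral_const_mul _ (by fun_prop),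
    ← lintegral_indicator hI]
  refine lintegral_congr fun t => ?_
  by_cases ht : t ∈ {t : ℝ | u ≤ t ∧ ENNReal.ofReal t < v}
  · have ht0 : 0 < t := hu.trans_le ht.1
    rw [Set.indicator_of_mem ht]
    have h2 : ∀ x : EuclideanSpace ℝ (Fin (n + 1)),
        (prodSlab n β u v).indicator (fun p => ENNReal.ofReal (p.1 ^ a)) (t, x)
          = (ball (0 : EuclideanSpace ℝ (Fin (n + 1))) (t ^ β)).indicator
            (fun _ => ENNReal.ofReal (t ^ a)) x := by
      intro x
      have h3 : (t, x) ∈ prodSlab n β u v ↔ x ∈ ball (0 : EuclideanSpace ℝ (Fin (n + 1))) (t ^ β) := by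
        rw [mem_ball_zero_iff]
        exact ⟨fun h => h.2, fun h => ⟨ht, h⟩⟩
      by_cases hx : x ∈ ball (0 : EuclideanSpace ℝ (Fin (n + 1))) (t ^ β)
      · rw [Set.indicator_of_mem hx, Set.indicator_of_mem (h3.2 hx)]
      · rw [Set.indicator_of_notMem hx, Set.indicator_of_notMem (fun h => hx (h3.1 h))]
    simp_rw [h2]
    rw [lintegral_indicator measurableSet_ball, setLIntegral_const,
      Measure.addHaar_ball _ _ (Real.rpow_nonneg ht0.le β), finrank_euclideanSpace_fin,
      ← mul_assoc, ← ENNReal.ofReal_mul (Real.rpow_nonneg ht0.le a), mul_comm]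
    congr 2
    rw [← Real.rpow_natCast, ← Real.rpow_mul ht0.le, ← Real.rpow_add ht0]
    congr 1
    push_cast
    rw [ha]
    ring
  · rw [Set.indicator_of_notMem ht]
    have h2 : ∀ x : EuclideanSpace ℝ (Fin (n + 1)),
        (prodSlab n β u v).indicator (fun p => ENNReal.ofReal (p.1 ^ a)) (t, x) = 0 :=
      fun x => Set.indicator_of_notMem (fun h => ht h.1) _
    simp_rw [h2]
    simp
end

section
/- There exists a constant c > 0, depending only on d, α and β, such that for every s ≥ 1, every x = (x₁, x̃) ∈ ℝ^d with x₁ ≤ s/2, and all u, v with s + s^β ≤ u < v ≤ ∞, the Lebesgue integral of z ↦ |z - x|^{-d-α} over P_β^{u,v} is at most c · ∫_u^v t^{-αβp₀ - 1} dt. -/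
open MeasureTheory
open scoped ENNReal

theorem tail_lt {n : ℕ} (z : EuclideanSpace ℝ (Fin (n + 2))) (r : ℝ) (h : tailNorm z < r)
    (i : Fin (n + 1)) : |z i.succ| < r := by
  refine lt_of_le_of_lt ?_ h
  unfold tailNorm
  apply Real.abs_le_sqrt
  exact Finset.single_le_sum (f := fun j => z j ^ 2) (fun j _ => sq_nonneg _)
    (by simp [Fin.succ_ne_zero])

theorem norm_ge_coord {n : ℕ} (z x : EuclideanSpace ℝ (Fin (n + 2))) :
    z 0 - x 0 ≤ ‖z - x‖ := by
  have h := PiLp.norm_apply_le (z - x) 0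
  have h2 := le_abs_self ((z - x) 0)
  rw [Real.norm_eq_abs] at h
  have : (z - x) 0 = z 0 - x 0 := rfl
  linarith

theorem lint_fubini (n : ℕ) (F : ℝ × (Fin (n + 1) → ℝ) → ℝ≥0∞) (hF : Measurable F) :
    ∫⁻ z : EuclideanSpace ℝ (Fin (n + 2)), F (z 0, fun i => z i.succ)
      = ∫⁻ t, ∫⁻ y, F (t, y) := by
  rw [← lintegral_prod _ hF.aemeasurable]
  have h1 := PiLp.volume_preserving_ofLp (Fin (n + 2))
  have h2 := volume_preserving_piFinSuccAbove (fun _ : Fin (n + 2) => ℝ) 0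
  have h3 := (h2.comp h1).lintegral_comp hF
  rw [← Measure.volume_eq_prod, ← h3]
  rfl

theorem Tset_meas (u : ℝ) (v : ℝ≥0∞) : MeasurableSet {t : ℝ | u ≤ t ∧ ENNReal.ofReal t < v} :=
  (measurableSet_le measurable_const measurable_id).inter
    (measurableSet_lt ENNReal.measurable_ofReal measurable_const)

theorem main_lint (n : ℕ) (α β : ℝ) (hα0 : 0 < α) (s : ℝ) (hs : 1 ≤ s)
    (x : EuclideanSpace ℝ (Fin (n + 2))) (hx : x 0 ≤ s / 2) (u : ℝ) (v : ℝ≥0∞) (hu : s ≤ u) :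
    ∫⁻ z in PbetaSlab n β u v, ENNReal.ofReal (‖z - x‖ ^ (-((n : ℝ) + 2) - α))
      ≤ ∫⁻ t in {t : ℝ | u ≤ t ∧ ENNReal.ofReal t < v},
          ENNReal.ofReal ((t / 2) ^ (-((n : ℝ) + 2) - α) * (2 * t ^ β) ^ (n + 1)) := by
  set T := {t : ℝ | u ≤ t ∧ ENNReal.ofReal t < v} with hT
  have hTm : MeasurableSet T := Tset_meas u v
  let S : Set (ℝ × (Fin (n + 1) → ℝ)) := {p | p.1 ∈ T ∧ ∀ i, |p.2 i| < p.1 ^ β}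
  have hS : MeasurableSet S := by
    have hE : S = (Prod.fst ⁻¹' T) ∩ ⋂ i, {p : ℝ × (Fin (n + 1) → ℝ) | |p.2 i| < p.1 ^ β} := by
      ext p
      simp only [Set.mem_inter_iff, Set.mem_iInter]
      rfl
    rw [hE]
    apply (measurable_fst hTm).inter
    refine MeasurableSet.iInter fun i => measurableSet_lt ?_ ?_
    · fun_prop
    · fun_prop
  let g : ℝ → ℝ≥0∞ := fun t => ENNReal.ofReal ((t / 2) ^ (-((n : ℝ) + 2) - α))
  have hg : Measurable g := by
    show Measurable (fun t : ℝ => ENNReal.ofReal ((t / 2) ^ (-((n : ℝ) + 2) - α)))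
    fun_prop
  let F : ℝ × (Fin (n + 1) → ℝ) → ℝ≥0∞ := S.indicator (fun p => g p.1)
  have hF : Measurable F := (hg.comp measurable_fst).indicator hS
  calc _ ≤ ∫⁻ z in PbetaSlab n β u v, F (z 0, fun i => z i.succ) := by
        refine setLIntegral_mono ?_ ?_
        · exact hF.comp (by fun_prop)
        · rintro z ⟨⟨hz0, hzt⟩, hz1⟩
          have hmem : (z 0, fun i : Fin (n+1) => z i.succ) ∈ S :=
            ⟨hz1, fun i => tail_lt z _ hzt i⟩
          simp only [F, Set.indicator_of_mem hmem, g]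
          apply ENNReal.ofReal_le_ofReal
          apply Real.rpow_le_rpow_of_nonpos (by linarith)
          · have := norm_ge_coord z x
            have := hz1.1
            linarith
          · have : (0:ℝ) ≤ n := Nat.cast_nonneg n
            linarith
    _ ≤ ∫⁻ z : EuclideanSpace ℝ (Fin (n + 2)), F (z 0, fun i => z i.succ) := setLIntegral_le_lintegral _ _
    _ = ∫⁻ t, ∫⁻ y, F (t, y) := lint_fubini n F hF
    _ = _ := by
        rw [← lintegral_indicator hTm]
        congr 1
        ext t
        by_cases ht : t ∈ T
        · have ht0 : 0 < t := by have := ht.1; linarith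
          have hr : 0 < t ^ β := Real.rpow_pos_of_pos ht0 _
          have : ∀ y, F (t, y) = (Metric.ball (0 : Fin (n + 1) → ℝ) (t ^ β)).indicator
              (fun _ => g t) y := by
            intro y
            simp only [F, Set.indicator, S, Set.mem_ofPred_eq, ht, true_and, mem_ball_zero_iff,
              pi_norm_lt_iff hr, Real.norm_eq_abs]
          simp only [this]
          rw [lintegral_indicator_const Metric.isOpen_ball.measurableSet,
            Real.volume_pi_ball _ hr, Set.indicator_of_mem ht]
          simp only [g, Fintype.card_fin]
          rw [ENNReal.ofReal_mul (by positivity)]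
        · rw [Set.indicator_of_notMem ht]
          have : ∀ y, F (t, y) = 0 := fun y => Set.indicator_of_notMem (fun h => ht h.1) _
          simp [this]

theorem stmt13 (n : ℕ) (α β : ℝ) (hα0 : 0 < α) (hα2 : α < 2)
    (hβ0 : 0 < β) (hβ1 : β < 1) :
    ∃ c > (0 : ℝ), ∀ s : ℝ, 1 ≤ s →
      ∀ x : EuclideanSpace ℝ (Fin (n + 2)), x 0 ≤ s / 2 →
      ∀ u : ℝ, ∀ v : ℝ≥0∞, s + s ^ β ≤ u → ENNReal.ofReal u < v →
        ∫ z in PbetaSlab n β u v, ‖z - x‖ ^ (-((n : ℝ) + 2) - α)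
          ≤ c * ∫ t in {t : ℝ | u ≤ t ∧ ENNReal.ofReal t < v},
                t ^ (-(α * β * ((((n : ℝ) + 1) * (1 - β) + α) / (α * β))) - 1) := by
  refine ⟨(1 / 2 : ℝ) ^ (-((n : ℝ) + 2) - α) * 2 ^ (n + 1), by positivity, ?_⟩
  intro s hs x hx u v hu huv
  have hsu : s ≤ u := by
    have : 0 < s ^ β := Real.rpow_pos_of_pos (by linarith) _
    linarith
  have hexp : -(α * β * ((((n : ℝ) + 1) * (1 - β) + α) / (α * β))) - 1
      = (-((n : ℝ) + 2) - α) + β * (n + 1) := by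
    rw [mul_div_cancel₀ _ (by positivity)]
    ring
  rw [hexp]
  have hneg : (-((n : ℝ) + 2) - α) + β * (n + 1) < -1 := by
    have : (0:ℝ) ≤ n := Nat.cast_nonneg n
    nlinarith
  have hTm := Tset_meas u v
  have hcong : ∀ t ∈ {t : ℝ | u ≤ t ∧ ENNReal.ofReal t < v},
      (1 / 2 : ℝ) ^ (-((n : ℝ) + 2) - α) * 2 ^ (n + 1) *
        t ^ ((-((n : ℝ) + 2) - α) + β * (n + 1)) =
      (t / 2) ^ (-((n : ℝ) + 2) - α) * (2 * t ^ β) ^ (n + 1) := by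
    intro t ht
    have ht0 : 0 < t := by have := ht.1; linarith
    rw [Real.rpow_add ht0, Real.rpow_mul ht0.le, mul_pow, div_eq_mul_one_div t,
      Real.mul_rpow ht0.le (by norm_num)]
    have : (t ^ β) ^ ((n : ℝ) + 1) = (t ^ β) ^ (n + 1) := by
      rw [← Real.rpow_natCast]; push_cast; rfl
    rw [this]; ring
  have hint : IntegrableOn (fun t : ℝ => (t / 2) ^ (-((n : ℝ) + 2) - α) * (2 * t ^ β) ^ (n + 1))
      {t : ℝ | u ≤ t ∧ ENNReal.ofReal t < v} := by
    refine IntegrableOn.congr_fun ?_ hcong hTm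
    apply Integrable.const_mul
    refine (integrableOn_Ioi_rpow_of_lt hneg (c := 1 / 2) (by norm_num)).mono_set ?_
    intro t ht
    have := ht.1
    simp only [Set.mem_Ioi]; linarith
  rw [← integral_const_mul, setIntegral_congr_fun hTm hcong]
  rw [integral_eq_lintegral_of_nonneg_ae, integral_eq_lintegral_of_nonneg_ae]
  · refine ENNReal.toReal_mono ?_ (main_lint n α β hα0 s hs x hx u v hsu)
    exact hint.lintegral_lt_top.ne
  · filter_upwards [ae_restrict_mem hTm] with t ht
    have ht0 : 0 < t := by have := ht.1; linarith
    simp only [Pi.zero_apply]; positivity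
  · exact hint.aestronglyMeasurable
  · exact Filter.Eventually.of_forall fun z => by simp only [Pi.zero_apply]; positivity
  · apply Measurable.aestronglyMeasurable
    fun_prop
end
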